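/- Fix n ≥ 1 and an even m ≥ 2, and let π be a mechanism on profiles D = (D_1,…,D_n) of size-m multisets of reals that is anonymous and strategyproof w.r.t. manipulation (for every agent i, every such profile D, and every size-m multiset D_i′, l(π(D),D_i) ≤ l(π(D_i′,D_{−i}),D_i)). Then for every agent i, every fixed tuple D_{−i} of the other agents' size-m reports, and all reals y0 ≤ y1, one of the following holds: either π(D_i,D_{−i}) ∈ [y0,y1] for every size-m multiset D_i with med(D_i) = [y0,y1]; or there exist s, h ∈ ℝ with (s < y0 ≤ y1 < h or s = h) such that for every size-m multiset D_i with med(D_i) = [y0,y1]: π(D_i,D_{−i}) = s if l(s,D_i) < l(h,D_i), π(D_i,D_{−i}) = h if l(s,D_i) > l(h,D_i), and π(D_i,D_{−i}) ∈ {s,h} if l(s,D_i) = l(h,D_i). -/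

import Mathlib

/-- The loss of a finite multiset `S` of reals at a point `x`:
`l(x,S) = \sum_{y \in S} |x - y|` (with multiplicity). -/
noncomputable def loss (x : ℝ) (S : Multiset ℝ) : ℝ :=
  (S.map fun y => |x - y|).sum

/-- Left endpoint `t_{⌈k/2⌉}` of the median interval of a (nonempty) multiset of reals. -/
noncomputable def medLo (S : Multiset ℝ) : ℝ :=
  (S.sort (· ≤ ·)).getD ((S.card - 1) / 2) 0

/-- Right endpoint `t_{⌊k/2⌋+1}` of the median interval of a (nonempty) multiset of reals. -/
noncomputable def medHi (S : Multiset ℝ) : ℝ :=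
  (S.sort (· ≤ ·)).getD (S.card / 2) 0

/-- Anonymity, on profiles of size-`m` multisets. -/
def AnonymousM (n m : ℕ) (π : (Fin n → Multiset ℝ) → ℝ) : Prop :=
  ∀ D : Fin n → Multiset ℝ, (∀ j, (D j).card = m) →
    ∀ σ : Equiv.Perm (Fin n), π (D ∘ σ) = π D

/-- Strategyproofness w.r.t. manipulation: an agent may replace her size-`m` report by
any other size-`m` multiset. -/
def StrategyproofM (n m : ℕ) (π : (Fin n → Multiset ℝ) → ℝ) : Prop :=
  ∀ (i : Fin n) (D : Fin n → Multiset ℝ), (∀ j, (D j).card = m) →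
    ∀ Di' : Multiset ℝ, Di'.card = m →
      loss (π D) (D i) ≤ loss (π (Function.update D i Di')) (D i)

/-- Efficiency, on profiles of size-`m` multisets. -/
def EfficientM (n m : ℕ) (π : (Fin n → Multiset ℝ) → ℝ) : Prop :=
  ∀ D : Fin n → Multiset ℝ, (∀ j, (D j).card = m) →
    ¬ ∃ x : ℝ, (∀ j, loss x (D j) ≤ loss (π D) (D j)) ∧
        ∃ j, loss x (D j) < loss (π D) (D j)

/-!
Having a median interval `[y₀, y₁]` makes an agent's loss single-plateaued: strictly decreasing up
to `y₀`, minimal on `[y₀, y₁]`, strictly increasing from `y₁` on. Fix the other agents' reports and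
consider the outputs over all reports with this median interval. If some output lies in `[y₀, y₁]`,
a report with an output outside would rather be exchanged for that one. Otherwise every output lies
strictly to one side of the plateau, and two outputs on the same side must agree, since all these
reports prefer the one closer to the plateau. So there are at most two outputs, and
strategyproofness makes each report obtain the cheaper of them.
-/

section OrderStatistics

variable {α : Type*} [LinearOrder α] {S : Multiset α} {j : ℕ} {x d : α}

lemma card_le_add_countP_of_le_sort_getD (hj : j < S.card) (hx : x ≤ (S.sort (· ≤ ·)).getD j d) :
    S.card ≤ j + S.countP (x ≤ ·) := by
  have hsorted : (S.sort (· ≤ ·)).SortedLE := (S.pairwise_sort (· ≤ ·)).sortedLE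
  have hcoe : (S.sort (· ≤ ·) : Multiset α) = S := S.sort_eq (· ≤ ·)
  generalize S.sort (· ≤ ·) = L at *
  subst hcoe
  rw [Multiset.coe_card] at hj
  rw [List.getD_eq_getElem _ _ hj] at hx
  have hdrop : (L.drop j).countP (x ≤ ·) = (L.drop j).length := by
    refine List.countP_eq_length.2 fun t ht => ?_
    obtain ⟨k, hk, rfl⟩ := List.mem_drop_iff_getElem.1 ht
    exact decide_eq_true (hx.trans (hsorted.getElem_le_getElem_of_le (by omega)))
  have hsub := (List.drop_sublist j L).countP_le (p := (x ≤ ·))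
  rw [hdrop, List.length_drop] at hsub
  rw [Multiset.coe_card, Multiset.coe_countP]
  omega

lemma succ_le_countP_of_sort_getD_le (hj : j < S.card) (hx : (S.sort (· ≤ ·)).getD j d ≤ x) :
    j + 1 ≤ S.countP (· ≤ x) := by
  have hsorted : (S.sort (· ≤ ·)).SortedLE := (S.pairwise_sort (· ≤ ·)).sortedLE
  have hcoe : (S.sort (· ≤ ·) : Multiset α) = S := S.sort_eq (· ≤ ·)
  generalize S.sort (· ≤ ·) = L at *
  subst hcoe
  rw [Multiset.coe_card] at hj
  rw [List.getD_eq_getElem _ _ hj] at hx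
  have htake : (L.take (j + 1)).countP (· ≤ x) = (L.take (j + 1)).length := by
    refine List.countP_eq_length.2 fun t ht => ?_
    obtain ⟨k, hk, rfl⟩ := List.mem_take_iff_getElem.1 ht
    exact decide_eq_true ((hsorted.getElem_le_getElem_of_le (by omega)).trans hx)
  have hsub := (List.take_sublist (j + 1) L).countP_le (p := (· ≤ x))
  rw [htake, List.length_take] at hsub
  rw [Multiset.coe_countP]
  omega

end OrderStatistics

section Median

variable {S : Multiset ℝ} {x : ℝ}

lemma card_lt_two_mul_countP_of_le_medLo (hS : S ≠ 0) (hx : x ≤ medLo S) :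
    S.card < 2 * S.countP (x ≤ ·) := by
  have hpos := Multiset.card_pos.2 hS
  have hcount := card_le_add_countP_of_le_sort_getD (by omega) hx
  omega

lemma card_le_two_mul_countP_of_le_medHi (hx : x ≤ medHi S) : S.card ≤ 2 * S.countP (x ≤ ·) := by
  rcases S.card.eq_zero_or_pos with h0 | hpos
  · omega
  have hcount := card_le_add_countP_of_le_sort_getD (by omega) hx
  omega

lemma card_lt_two_mul_countP_of_medHi_le (hS : S ≠ 0) (hx : medHi S ≤ x) :
    S.card < 2 * S.countP (· ≤ x) := by
  have hpos := Multiset.card_pos.2 hS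
  have hcount := succ_le_countP_of_sort_getD_le (by omega) hx
  omega

lemma card_le_two_mul_countP_of_medLo_le (hx : medLo S ≤ x) : S.card ≤ 2 * S.countP (· ≤ x) := by
  rcases S.card.eq_zero_or_pos with h0 | hpos
  · omega
  have hcount := succ_le_countP_of_sort_getD_le (by omega) hx
  omega

end Median

section Loss

variable {x x' : ℝ}

lemma loss_cons (x a : ℝ) (S : Multiset ℝ) : loss x (a ::ₘ S) = |x - a| + loss x S := by
  simp [loss]

lemma loss_neg_map_neg (x : ℝ) (S : Multiset ℝ) : loss (-x) (S.map Neg.neg) = loss x S := by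
  simp only [loss, Multiset.map_map, Function.comp_def, neg_sub_neg, abs_sub_comm]

-- Moving right from `x` to `x'` gains `x' - x` for each point beyond `x'` and costs at most
-- `x' - x` for each other point.
lemma loss_right_le (h : x ≤ x') (S : Multiset ℝ) :
    loss x' S ≤ loss x S + (x' - x) * (S.card - 2 * S.countP (x' ≤ ·)) := by
  induction S using Multiset.induction_on with
  | empty => simp [loss]
  | cons a S ih =>
    rw [loss_cons, loss_cons, Multiset.card_cons, Multiset.countP_cons]
    split_ifs with ha
    · rw [abs_of_nonpos (sub_nonpos.2 ha), abs_of_nonpos (sub_nonpos.2 (h.trans ha))]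
      push_cast
      linarith
    · have htri : |x' - a| ≤ |x' - x| + |x - a| := abs_sub_le _ _ _
      rw [abs_of_nonneg (sub_nonneg.2 h)] at htri
      push_cast
      linarith

lemma loss_left_le (h : x ≤ x') (S : Multiset ℝ) :
    loss x S ≤ loss x' S + (x' - x) * (S.card - 2 * S.countP (· ≤ x)) := by
  have hcount : (S.map Neg.neg).countP (-x ≤ ·) = S.countP (· ≤ x) := by
    rw [Multiset.countP_map, Multiset.countP_eq_card_filter]
    simp only [neg_le_neg_iff]
  have hneg := loss_right_le (neg_le_neg h) (S.map Neg.neg)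
  rwa [loss_neg_map_neg, loss_neg_map_neg, Multiset.card_map, hcount, neg_sub_neg] at hneg

lemma strictAntiOn_loss {S : Multiset ℝ} (hS : S ≠ 0) :
    StrictAntiOn (loss · S) (Set.Iic (medLo S)) := by
  intro x _ x' hx' h
  have hcount : (S.card : ℝ) < 2 * S.countP (x' ≤ ·) :=
    mod_cast card_lt_two_mul_countP_of_le_medLo hS hx'
  have hslope := mul_neg_of_pos_of_neg (sub_pos.2 h) (sub_neg.2 hcount)
  linarith [loss_right_le h.le S]

lemma antitoneOn_loss (S : Multiset ℝ) : AntitoneOn (loss · S) (Set.Iic (medHi S)) := by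
  intro x _ x' hx' h
  have hcount : (S.card : ℝ) ≤ 2 * S.countP (x' ≤ ·) :=
    mod_cast card_le_two_mul_countP_of_le_medHi hx'
  have hslope := mul_nonpos_of_nonneg_of_nonpos (sub_nonneg.2 h) (sub_nonpos.2 hcount)
  linarith [loss_right_le h S]

lemma strictMonoOn_loss {S : Multiset ℝ} (hS : S ≠ 0) :
    StrictMonoOn (loss · S) (Set.Ici (medHi S)) := by
  intro x hx x' _ h
  have hcount : (S.card : ℝ) < 2 * S.countP (· ≤ x) :=
    mod_cast card_lt_two_mul_countP_of_medHi_le hS hx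
  have hslope := mul_neg_of_pos_of_neg (sub_pos.2 h) (sub_neg.2 hcount)
  linarith [loss_left_le h.le S]

lemma monotoneOn_loss (S : Multiset ℝ) : MonotoneOn (loss · S) (Set.Ici (medLo S)) := by
  intro x hx x' _ h
  have hcount : (S.card : ℝ) ≤ 2 * S.countP (· ≤ x) :=
    mod_cast card_le_two_mul_countP_of_medLo_le hx
  have hslope := mul_nonpos_of_nonneg_of_nonpos (sub_nonneg.2 h) (sub_nonpos.2 hcount)
  linarith [loss_left_le h S]

end Loss

section SinglePlateaued

variable {ι α β : Type*}

/-- A cost function is single-plateaued on `[a, b]` if it is minimal there, strictly decreasing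
up to `a` and strictly increasing from `b` on. These are the only properties of the loss of an agent
with median interval `[a, b]` that the characterization depends on. -/
structure IsSinglePlateaued [Preorder α] [Preorder β] (cost : α → β) (a b : α) : Prop where
  strictAntiOn : StrictAntiOn cost (Set.Iic a)
  strictMonoOn : StrictMonoOn cost (Set.Ici b)
  le_of_mem_Icc : ∀ x ∈ Set.Icc a b, ∀ y, cost x ≤ cost y

/-- A choice of outcomes `f`, one for each type `i` of a single agent, is truthful if no type with
cost function `cost i` is better off with the outcome of another type. -/
def IsTruthful [LE β] (cost : ι → α → β) (f : ι → α) : Prop :=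
  ∀ i j, cost i (f i) ≤ cost i (f j)

lemma IsTruthful.eq_of_cost_lt [Preorder β] {cost : ι → α → β} {f : ι → α}
    (hf : IsTruthful cost f) {i j k : ι} (hk : f k = f i ∨ f k = f j)
    (hlt : cost k (f i) < cost k (f j)) : f k = f i :=
  hk.resolve_right fun hkj => (hf k i).not_gt (by rwa [hkj])

variable [LinearOrder α] [Preorder β]

lemma IsSinglePlateaued.mem_Icc_of_le {cost : α → β} {a b x z : α}
    (hcost : IsSinglePlateaued cost a b) (hz : z ∈ Set.Icc a b) (hxz : cost x ≤ cost z) :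
    x ∈ Set.Icc a b := by
  have hmin (y : α) : cost x ≤ cost y := hxz.trans (hcost.le_of_mem_Icc z hz y)
  constructor
  · by_contra! hxa
    exact (hmin a).not_gt (hcost.strictAntiOn hxa.le Set.self_mem_Iic hxa)
  · by_contra! hbx
    exact (hmin b).not_gt (hcost.strictMonoOn Set.self_mem_Ici hbx.le hbx)

namespace IsTruthful

variable {cost : ι → α → β} {f : ι → α} {a b : α}

lemma forall_mem_Icc_or_forall_notMem_Icc (hf : IsTruthful cost f)
    (hcost : ∀ i, IsSinglePlateaued (cost i) a b) :
    (∀ i, f i ∈ Set.Icc a b) ∨ ∀ i, f i ∉ Set.Icc a b := by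
  refine or_iff_not_imp_right.2 fun hin i => ?_
  push Not at hin
  obtain ⟨j, hj⟩ := hin
  exact (hcost i).mem_Icc_of_le hj (hf i j)

lemma eq_of_lt_left (hf : IsTruthful cost f) (hcost : ∀ i, IsSinglePlateaued (cost i) a b)
    {i j : ι} (hi : f i < a) (hj : f j < a) : f i = f j :=
  le_antisymm (((hcost j).strictAntiOn.le_iff_ge hj.le hi.le).1 (hf j i))
    (((hcost i).strictAntiOn.le_iff_ge hi.le hj.le).1 (hf i j))

lemma eq_of_right_lt (hf : IsTruthful cost f) (hcost : ∀ i, IsSinglePlateaued (cost i) a b)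
    {i j : ι} (hi : b < f i) (hj : b < f j) : f i = f j :=
  le_antisymm (((hcost i).strictMonoOn.le_iff_le hi.le hj.le).1 (hf i j))
    (((hcost j).strictMonoOn.le_iff_le hj.le hi.le).1 (hf j i))

lemma exists_forall_eq_or_eq [Nonempty ι] (hf : IsTruthful cost f)
    (hcost : ∀ i, IsSinglePlateaued (cost i) a b) (hout : ∀ i, f i ∉ Set.Icc a b) :
    ∃ i j, (f i < a ∧ b < f j ∨ f i = f j) ∧ ∀ k, f k = f i ∨ f k = f j := by
  have hside (k : ι) : f k < a ∨ b < f k := by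
    simpa only [Set.mem_Icc, not_and_or, not_le] using hout k
  by_cases hleft : ∃ i, f i < a
  · obtain ⟨i, hi⟩ := hleft
    by_cases hright : ∃ j, b < f j
    · obtain ⟨j, hj⟩ := hright
      exact ⟨i, j, .inl ⟨hi, hj⟩, fun k => (hside k).imp
        (fun hk => hf.eq_of_lt_left hcost hk hi) (fun hk => hf.eq_of_right_lt hcost hk hj)⟩
    · exact ⟨i, i, .inr rfl, fun k => .inl <| hf.eq_of_lt_left hcost
        ((hside k).resolve_right fun hk => hright ⟨k, hk⟩) hi⟩
  · have hright (k : ι) : b < f k := (hside k).resolve_left fun hk => hleft ⟨k, hk⟩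
    obtain ⟨i⟩ := ‹Nonempty ι›
    exact ⟨i, i, .inr rfl, fun k => .inl (hf.eq_of_right_lt hcost (hright k) (hright i))⟩

theorem forall_mem_Icc_or_exists_pair (hf : IsTruthful cost f)
    (hcost : ∀ i, IsSinglePlateaued (cost i) a b) :
    (∀ i, f i ∈ Set.Icc a b) ∨
    ∃ s h, (s < a ∧ b < h ∨ s = h) ∧ ∀ i,
      (cost i s < cost i h → f i = s) ∧ (cost i h < cost i s → f i = h) ∧
      (cost i s = cost i h → f i = s ∨ f i = h) := by
  cases isEmpty_or_nonempty ι with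
  | inl _ => exact .inl isEmptyElim
  | inr _ =>
    refine (hf.forall_mem_Icc_or_forall_notMem_Icc hcost).imp_right fun hout => ?_
    obtain ⟨i, j, hij, heq⟩ := hf.exists_forall_eq_or_eq hcost hout
    exact ⟨f i, f j, hij, fun k =>
      ⟨hf.eq_of_cost_lt (heq k), hf.eq_of_cost_lt (heq k).symm, fun _ => heq k⟩⟩

end IsTruthful

end SinglePlateaued

lemma isSinglePlateaued_loss {S : Multiset ℝ} (hS : S ≠ 0) :
    IsSinglePlateaued (loss · S) (medLo S) (medHi S) where
  strictAntiOn := strictAntiOn_loss hS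
  strictMonoOn := strictMonoOn_loss hS
  le_of_mem_Icc x hx y := by
    rcases le_total y x with hyx | hxy
    · exact antitoneOn_loss S (hyx.trans hx.2) hx.2 hyx
    · exact monotoneOn_loss S hx.1 (hx.1.trans hxy) hxy

lemma StrategyproofM.loss_update_le {n m : ℕ} {π : (Fin n → Multiset ℝ) → ℝ}
    (hsp : StrategyproofM n m π) {i : Fin n} {D : Fin n → Multiset ℝ}
    (hD : ∀ j, j ≠ i → (D j).card = m) {S T : Multiset ℝ} (hS : S.card = m) (hT : T.card = m) :
    loss (π (Function.update D i S)) S ≤ loss (π (Function.update D i T)) S := by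
  have hcard : ∀ j, (Function.update D i S j).card = m :=
    (Function.forall_update_iff D fun _ R => R.card = m).2 ⟨hS, hD⟩
  simpa only [Function.update_self, Function.update_idem] using hsp i _ hcard T hT

theorem stmt_15_general {n m : ℕ} (hm : 0 < m) {π : (Fin n → Multiset ℝ) → ℝ}
    (hsp : StrategyproofM n m π) (i : Fin n) {D : Fin n → Multiset ℝ}
    (hD : ∀ j, j ≠ i → (D j).card = m) (y0 y1 : ℝ) :
    (∀ Di : Multiset ℝ, Di.card = m → medLo Di = y0 → medHi Di = y1 →
        π (Function.update D i Di) ∈ Set.Icc y0 y1) ∨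
    (∃ s h : ℝ, (s < y0 ∧ y1 < h ∨ s = h) ∧
      ∀ Di : Multiset ℝ, Di.card = m → medLo Di = y0 → medHi Di = y1 →
        (loss s Di < loss h Di → π (Function.update D i Di) = s) ∧
        (loss h Di < loss s Di → π (Function.update D i Di) = h) ∧
        (loss s Di = loss h Di →
          π (Function.update D i Di) = s ∨ π (Function.update D i Di) = h)) := by
  let Report := {S : Multiset ℝ // S.card = m ∧ medLo S = y0 ∧ medHi S = y1}
  have htruthful : IsTruthful (fun (S : Report) x => loss x S)
      (fun S => π (Function.update D i S)) :=
    fun S T => hsp.loss_update_le hD S.2.1 T.2.1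
  have hplateau : ∀ S : Report, IsSinglePlateaued (loss · S) y0 y1 := by
    rintro ⟨S, hcard, rfl, rfl⟩
    exact isSinglePlateaued_loss (Multiset.card_pos.1 (hcard ▸ hm))
  simpa only [Report, Subtype.forall, and_imp] using
    htruthful.forall_mem_Icc_or_exists_pair hplateau

/-- Lemma 5, even case: for even `m`, an anonymous mechanism that is
strategyproof w.r.t. manipulation has, fixing the other agents' size-`m` reports and
agent `i`'s median interval `[y0,y1]`, either all outputs in `[y0,y1]`, or at most two
possible outputs `s, h` with `s < y0 ≤ y1 < h` or `s = h`, selected as in Eqn. (8). -/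
theorem stmt_15 (n m : ℕ) (hn : 1 ≤ n) (hm : Even m) (hm2 : 2 ≤ m)
    (π : (Fin n → Multiset ℝ) → ℝ)
    (hanon : AnonymousM n m π) (hsp : StrategyproofM n m π)
    (i : Fin n) (D : Fin n → Multiset ℝ) (hD : ∀ j, j ≠ i → (D j).card = m)
    (y0 y1 : ℝ) (hy : y0 ≤ y1) :
    (∀ Di : Multiset ℝ, Di.card = m → medLo Di = y0 → medHi Di = y1 →
        π (Function.update D i Di) ∈ Set.Icc y0 y1) ∨
    (∃ s h : ℝ, (s < y0 ∧ y1 < h ∨ s = h) ∧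
      ∀ Di : Multiset ℝ, Di.card = m → medLo Di = y0 → medHi Di = y1 →
        (loss s Di < loss h Di → π (Function.update D i Di) = s) ∧
        (loss h Di < loss s Di → π (Function.update D i Di) = h) ∧
        (loss s Di = loss h Di →
          π (Function.update D i Di) = s ∨ π (Function.update D i Di) = h)) :=
  stmt_15_general (by omega) hsp i hD y0 y1
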